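/- arXiv:1909.05285 — 6 statements merged into one kernel-verified Lean document; each statement's English description precedes it below -/
import Mathlib

section
/- Let (Ω,Σ,μ) be an arbitrary measure space, let X be a closed linear subspace of L¹(μ), and let f be an extreme point of the closed unit ball B_X of X. Then for any sequences (gₙ) and (hₙ) in B_X such that ½(gₙ + hₙ) converges to f in norm, the sequence (gₙ) converges weakly to f, that is, Λ(gₙ) → Λ(f) for every continuous linear functional Λ on X. -/
open MeasureTheory Filter Topology

/-!
Unless `X` is trivial, `‖f‖ = 1`, so `‖gₙ‖ + ‖2f - gₙ‖ → 2‖f‖`. In `L¹` this forces `gₙ` to be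
norm-close to its radial truncation at height `2|f|`, because `(|g| - 2|f|)⁺` is pointwise at most
`(|g| + |2f - g| - 2|f|) / 2`. Functions dominated by a fixed integrable function form a relatively
weakly compact set, so `gₙ` has a weak limit `y` along every ultrafilter finer than the filter at
infinity. Then `hₙ` converges weakly to `2f - y` along it; both limits lie in the unit ball of `X`,
which is weakly closed, and extremality of `f` forces `y = f`.
-/

section WeakTopology

theorem isCompact_toWeakSpace_closedBall {𝕜 H : Type*} [RCLike 𝕜] [NormedAddCommGroup H]
    [InnerProductSpace 𝕜 H] [CompleteSpace H] (x : H) (r : ℝ) :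
    IsCompact (toWeakSpace 𝕜 H '' Metric.closedBall x r) := by
  let J := InnerProductSpace.toDual 𝕜 H
  let Φ (w : WeakDual 𝕜 H) : WeakSpace 𝕜 H := toWeakSpace 𝕜 H (J.symm w.toStrongDual)
  have continuous_Φ : Continuous Φ := by
    refine WeakBilin.continuous_of_continuous_eval _ fun Λ => ?_
    have eval_Φ (w : WeakDual 𝕜 H) : Λ (J.symm w.toStrongDual) = star (w (J.symm Λ)) := by
      rw [← InnerProductSpace.toDual_symm_apply (y := Λ), ← inner_conj_symm,
        InnerProductSpace.toDual_symm_apply]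
      rfl
    exact (WeakDual.eval_continuous (J.symm Λ)).star.congr fun w => (eval_Φ w).symm
  have image_Φ : Φ '' (WeakDual.toStrongDual ⁻¹' Metric.closedBall (J x) r) =
      toWeakSpace 𝕜 H '' Metric.closedBall x r := by
    ext y
    constructor
    · rintro ⟨w, hw, rfl⟩
      refine ⟨J.symm w.toStrongDual, ?_, rfl⟩
      rwa [Metric.mem_closedBall, ← J.dist_map, J.apply_symm_apply]
    · rintro ⟨v, hv, rfl⟩
      refine ⟨StrongDual.toWeakDual (J v), ?_, congrArg (toWeakSpace 𝕜 H) (J.symm_apply_apply v)⟩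
      exact (J.dist_map v x).trans_le hv
  exact image_Φ ▸ (WeakDual.isCompact_closedBall (J x) r).image continuous_Φ

theorem isClosed_toWeakSpace_image {𝕜 E : Type*} [RCLike 𝕜] [AddCommGroup E] [Module 𝕜 E]
    [Module ℝ E] [IsScalarTower ℝ 𝕜 E] [TopologicalSpace E] [IsTopologicalAddGroup E]
    [ContinuousSMul 𝕜 E] [LocallyConvexSpace ℝ E] {s : Set E}
    (hconv : Convex ℝ s) (hs : IsClosed s) : IsClosed (toWeakSpace 𝕜 E '' s) := by
  rw [← hs.closure_eq, hconv.toWeakSpace_closure 𝕜]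
  exact isClosed_closure

theorem isInducing_weakSpace_map_subtypeL {𝕜 E : Type*} [RCLike 𝕜] [NormedAddCommGroup E]
    [NormedSpace 𝕜 E] (X : Submodule 𝕜 E) : IsInducing (WeakSpace.map X.subtypeL) := by
  choose ext ext_apply _ using exists_extension_norm_eq X
  let evalExt (v : WeakSpace 𝕜 E) (Λ : StrongDual 𝕜 X) : 𝕜 := ext Λ ((toWeakSpace 𝕜 E).symm v)
  have continuous_evalExt : Continuous evalExt :=
    continuous_pi fun Λ => WeakBilin.eval_continuous _ (ext Λ)
  refine .of_comp (map_continuous _) continuous_evalExt ⟨?_⟩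
  have evalExt_comp_map : evalExt ∘ WeakSpace.map X.subtypeL =
      fun v Λ => Λ ((toWeakSpace 𝕜 X).symm v) :=
    funext fun v => funext fun Λ => ext_apply Λ v
  rw [evalExt_comp_map]
  rfl

theorem exists_tendsto_toWeakSpace_of_isClosed_submodule {E ι : Type*} [NormedAddCommGroup E]
    [NormedSpace ℝ E] {X : Submodule ℝ E} (hX : IsClosed (X : Set E)) {l : Filter ι} [l.NeBot]
    {g : ι → X} (hg : ∃ y, Tendsto (fun i => toWeakSpace ℝ E (g i)) l (𝓝 y)) :
    ∃ y, Tendsto (fun i => toWeakSpace ℝ X (g i)) l (𝓝 y) := by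
  obtain ⟨y, hy⟩ := hg
  obtain ⟨z, hz, rfl⟩ := (isClosed_toWeakSpace_image (𝕜 := ℝ) X.convex hX).mem_of_tendsto hy
    (.of_forall fun i => ⟨g i, (g i).2, rfl⟩)
  exact ⟨toWeakSpace ℝ X ⟨z, hz⟩, (isInducing_weakSpace_map_subtypeL X).tendsto_nhds_iff.2 hy⟩

theorem tendsto_of_tendsto_midpoint_extremePoint {E ι : Type*} [AddCommGroup E] [Module ℝ E]
    [TopologicalSpace E] [IsTopologicalAddGroup E] [ContinuousConstSMul ℝ E] {K : Set E}
    (hK : IsClosed K) {f : E} (hf : f ∈ K.extremePoints ℝ) {l : Filter ι} {g h : ι → E}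
    (hg : ∀ᶠ i in l, g i ∈ K) (hh : ∀ᶠ i in l, h i ∈ K)
    (hmid : Tendsto (fun i => (1 / 2 : ℝ) • (g i + h i)) l (𝓝 f))
    (hlim : ∀ U : Ultrafilter ι, ↑U ≤ l → ∃ y, Tendsto g U (𝓝 y)) : Tendsto g l (𝓝 f) := by
  rw [tendsto_iff_ultrafilter]
  intro U hU
  obtain ⟨y, hy⟩ := hlim U hU
  have h_lim : Tendsto h U (𝓝 ((2 : ℝ) • f - y)) := by
    refine (((hmid.mono_left hU).const_smul (2 : ℝ)).sub hy).congr fun i => ?_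
    module
  have y_mem : y ∈ K := hK.mem_of_tendsto hy (hU hg)
  have reflection_mem : (2 : ℝ) • f - y ∈ K := hK.mem_of_tendsto h_lim (hU hh)
  have f_mem : f ∈ openSegment ℝ y ((2 : ℝ) • f - y) :=
    ⟨1 / 2, 1 / 2, by norm_num, by norm_num, by norm_num, by module⟩
  rwa [hf.2 y_mem reflection_mem f_mem] at hy

end WeakTopology

section NormedSpace

variable {E ι : Type*} [NormedAddCommGroup E] [NormedSpace ℝ E]

theorem closedBall_subset_closedBall_norm_of_mem_extremePoints {f : E} {r : ℝ}
    (hf : f ∈ (Metric.closedBall (0 : E) r).extremePoints ℝ) :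
    Metric.closedBall (0 : E) r ⊆ Metric.closedBall 0 ‖f‖ := by
  nontriviality E
  have norm_f : ‖f‖ = r := by simpa using extremePoints_closedBall_subset_sphere hf
  rw [norm_f]

theorem tendsto_norm_add_norm_two_smul_sub {f : E} {l : Filter ι} {g h : ι → E}
    (hg : ∀ᶠ i in l, ‖g i‖ ≤ ‖f‖) (hh : ∀ᶠ i in l, ‖h i‖ ≤ ‖f‖)
    (hmid : Tendsto (fun i => (1 / 2 : ℝ) • (g i + h i)) l (𝓝 f)) :
    Tendsto (fun i => ‖g i‖ + ‖(2 : ℝ) • f - g i‖) l (𝓝 (2 * ‖f‖)) := by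
  have defect : Tendsto (fun i => 2 * ‖f‖ + ‖(2 : ℝ) • f - (g i + h i)‖) l (𝓝 (2 * ‖f‖)) := by
    have := ((hmid.const_sub f).const_smul (2 : ℝ)).norm.const_add (2 * ‖f‖)
    rw [sub_self, smul_zero, norm_zero, add_zero] at this
    exact this.congr fun i => by congr 2; module
  refine tendsto_of_tendsto_of_tendsto_of_le_of_le' tendsto_const_nhds defect
    (.of_forall fun i => ?_) ?_
  · calc 2 * ‖f‖ = ‖g i + ((2 : ℝ) • f - g i)‖ := by simp [norm_smul]
      _ ≤ ‖g i‖ + ‖(2 : ℝ) • f - g i‖ := norm_add_le _ _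
  · filter_upwards [hg, hh] with i hgi hhi
    calc ‖g i‖ + ‖(2 : ℝ) • f - g i‖
        = ‖g i‖ + ‖((2 : ℝ) • f - (g i + h i)) + h i‖ := by congr 2; abel
      _ ≤ ‖g i‖ + (‖(2 : ℝ) • f - (g i + h i)‖ + ‖h i‖) := by gcongr; exact norm_add_le _ _
      _ ≤ 2 * ‖f‖ + ‖(2 : ℝ) • f - (g i + h i)‖ := by linarith

/-- The radial retraction onto the closed ball of radius `r ≥ 0`, used to cut an integrable function
down to one dominated by a given integrable function. The junk value `r / 0 = 0` is harmless, as
it only multiplies the zero vector. -/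
noncomputable def radialTruncation (r : ℝ) (v : E) : E := min 1 (r / ‖v‖) • v

theorem norm_radialTruncation {r : ℝ} (hr : 0 ≤ r) (v : E) :
    ‖radialTruncation r v‖ = min ‖v‖ r := by
  rcases eq_or_ne v 0 with rfl | hv
  · simp [radialTruncation, hr]
  · have : 0 < ‖v‖ := norm_pos_iff.2 hv
    rw [radialTruncation, norm_smul, Real.norm_of_nonneg (by positivity),
      min_mul_of_nonneg _ _ (norm_nonneg v), one_mul, div_mul_cancel₀ r this.ne']

theorem norm_sub_radialTruncation {r : ℝ} (hr : 0 ≤ r) (v : E) :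
    ‖v - radialTruncation r v‖ = max 0 (‖v‖ - r) := by
  rcases eq_or_ne v 0 with rfl | hv
  · simp [radialTruncation, hr]
  · have : 0 < ‖v‖ := norm_pos_iff.2 hv
    have e : v - radialTruncation r v = (1 - min 1 (r / ‖v‖)) • v := by
      rw [radialTruncation, sub_smul, one_smul]
    rw [e, norm_smul, Real.norm_of_nonneg (by simp), ← max_sub_sub_left,
      max_mul_of_nonneg _ _ (norm_nonneg v), sub_self, zero_mul, sub_mul, one_mul,
      div_mul_cancel₀ r this.ne']

theorem norm_sub_radialTruncation_le (w v : E) :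
    ‖v - radialTruncation (2 * ‖w‖) v‖ ≤ (‖v‖ + ‖(2 : ℝ) • w - v‖ - 2 * ‖w‖) / 2 := by
  rw [norm_sub_radialTruncation (by positivity)]
  have norm_two_smul : ‖(2 : ℝ) • w‖ = 2 * ‖w‖ := by simp [norm_smul]
  refine max_le ?_ ?_
  · linarith [norm_sub_norm_le ((2 : ℝ) • w) v]
  · linarith [norm_sub_norm_le v ((2 : ℝ) • w), norm_sub_rev v ((2 : ℝ) • w)]

end NormedSpace

section L1

variable {Ω E : Type*} [MeasurableSpace Ω] {μ : Measure Ω} [NormedAddCommGroup E]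

theorem memLp_two_sqrt_of_integrable {b : Ω → ℝ} (hb : Integrable b μ) :
    MemLp (fun x => √(b x)) 2 μ := by
  rw [memLp_two_iff_integrable_sq (by have := hb.1; fun_prop)]
  simpa only [Real.sq_sqrt'] using hb.pos_part

theorem exists_Lp_two_holder_eq_of_ae_norm_le_sq [NormedSpace ℝ E] (s : Lp ℝ 2 μ) (φ : Lp E 1 μ)
    (hφ : ∀ᵐ x ∂μ, ‖φ x‖ ≤ s x ^ 2) :
    ∃ ψ : Lp E 2 μ, ‖ψ‖ ≤ ‖s‖ ∧ (ContinuousLinearMap.lsmul ℝ ℝ).holder 1 s ψ = φ := by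
  let q (x : Ω) : E := (s x)⁻¹ • φ x
  have hq : ∀ᵐ x ∂μ, ‖q x‖ ≤ ‖s x‖ ∧ s x • q x = φ x := by
    filter_upwards [hφ] with x hx
    rcases eq_or_ne (s x) 0 with h0 | h0
    · simp_all [q]
    · refine ⟨?_, smul_inv_smul₀ h0 _⟩
      rw [norm_smul, norm_inv, inv_mul_le_iff₀ (norm_pos_iff.2 h0), ← sq, Real.norm_eq_abs, sq_abs]
      exact hx
  have q_memLp : MemLp q 2 μ :=
    (Lp.memLp s).of_le ((Lp.memLp s).1.inv₀.smul (Lp.memLp φ).1) (hq.mono fun _ hx => hx.1)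
  refine ⟨q_memLp.toLp, ?_, ?_⟩
  · refine Lp.norm_le_norm_of_ae_le ?_
    filter_upwards [hq, q_memLp.coeFn_toLp] with x hx hqx
    rw [hqx]
    exact hx.1
  · ext1
    filter_upwards [hq, q_memLp.coeFn_toLp,
      (ContinuousLinearMap.lsmul ℝ ℝ).coeFn_holder (r := 1) s q_memLp.toLp] with x hx hqx hTx
    rw [hTx, hqx]
    exact hx.2

theorem isCompact_closure_toWeakSpace_ae_norm_le [InnerProductSpace ℝ E] [CompleteSpace E]
    {b : Ω → ℝ} (hb : Integrable b μ) :
    IsCompact (closure (toWeakSpace ℝ (Lp E 1 μ) '' {φ | ∀ᵐ x ∂μ, ‖φ x‖ ≤ b x})) := by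
  -- Multiplication by `√b ∈ L²` maps a ball of the Hilbert space `L²(μ; E)` over the given set.
  let s : Lp ℝ 2 μ := (memLp_two_sqrt_of_integrable hb).toLp
  let T : Lp E 2 μ →L[ℝ] Lp E 1 μ := (ContinuousLinearMap.lsmul ℝ ℝ).holderL μ 2 2 1 s
  refine ((isCompact_toWeakSpace_closedBall (𝕜 := ℝ) (0 : Lp E 2 μ) ‖s‖).image
    (map_continuous (WeakSpace.map T))).closure_of_subset ?_
  rintro _ ⟨φ, hφ, rfl⟩
  have hφs : ∀ᵐ x ∂μ, ‖φ x‖ ≤ s x ^ 2 := by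
    filter_upwards [hφ, (memLp_two_sqrt_of_integrable hb).coeFn_toLp] with x hx hsx
    rw [hsx, Real.sq_sqrt']
    exact hx.trans (le_max_left _ _)
  obtain ⟨ψ, hψ, hTψ⟩ := exists_Lp_two_holder_eq_of_ae_norm_le_sq s φ hφs
  exact ⟨_, ⟨ψ, mem_closedBall_zero_iff.2 hψ, rfl⟩, hTψ⟩

theorem exists_ae_norm_le_two_mul_norm_sub_le [NormedSpace ℝ E] (f g : Lp E 1 μ) :
    ∃ φ : Lp E 1 μ, (∀ᵐ x ∂μ, ‖φ x‖ ≤ 2 * ‖f x‖) ∧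
      ‖g - φ‖ ≤ (‖g‖ + ‖(2 : ℝ) • f - g‖ - 2 * ‖f‖) / 2 := by
  let φ (x : Ω) : E := radialTruncation (2 * ‖f x‖) (g x)
  have hφ (x : Ω) : ‖φ x‖ = min ‖g x‖ (2 * ‖f x‖) := norm_radialTruncation (by positivity) _
  have φ_memLp : MemLp φ 1 μ := by
    refine (Lp.memLp g).of_le ?_ (.of_forall fun x => (hφ x).trans_le (min_le_left _ _))
    have hf := (Lp.memLp f).1
    have hg := (Lp.memLp g).1
    exact (aestronglyMeasurable_const.inf ((hf.norm.const_mul 2).div₀ hg.norm)).smul hg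
  refine ⟨φ_memLp.toLp, ?_, ?_⟩
  · filter_upwards [φ_memLp.coeFn_toLp] with x hx
    rw [hx, hφ]
    exact min_le_right _ _
  · have hf := (L1.integrable_coeFn f).norm
    have hg := (L1.integrable_coeFn g).norm
    have hfg := (L1.integrable_coeFn ((2 : ℝ) • f - g)).norm
    have hd := (L1.integrable_coeFn (g - φ_memLp.toLp)).norm
    have pointwise : ∀ᵐ x ∂μ, ‖(g - φ_memLp.toLp : Lp E 1 μ) x‖ ≤
        (‖g x‖ + ‖((2 : ℝ) • f - g : Lp E 1 μ) x‖ - 2 * ‖f x‖) / 2 := by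
      filter_upwards [φ_memLp.coeFn_toLp, Lp.coeFn_sub g φ_memLp.toLp,
        Lp.coeFn_sub ((2 : ℝ) • f) g, Lp.coeFn_smul (2 : ℝ) f] with x hφx hsub_φ hsub_g hsmul
      simp only [hsub_φ, hsub_g, hsmul, hφx, Pi.sub_apply, Pi.smul_apply]
      exact norm_sub_radialTruncation_le (f x) (g x)
    simp only [L1.norm_eq_integral_norm]
    calc ∫ x, ‖(g - φ_memLp.toLp : Lp E 1 μ) x‖ ∂μ
        ≤ ∫ x, (‖g x‖ + ‖((2 : ℝ) • f - g : Lp E 1 μ) x‖ - 2 * ‖f x‖) / 2 ∂μ :=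
          integral_mono_ae hd (((hg.add hfg).sub (hf.const_mul 2)).div_const 2) pointwise
      _ = _ := by
          rw [integral_div, integral_sub (by exact hg.add hfg) (hf.const_mul 2),
            integral_add hg hfg, integral_const_mul]

theorem exists_tendsto_toWeakSpace_of_tendsto_norm_add_norm [InnerProductSpace ℝ E]
    [CompleteSpace E] {ι : Type*} {f : Lp E 1 μ} {g : ι → Lp E 1 μ} {U : Ultrafilter ι}
    (hg : Tendsto (fun i => ‖g i‖ + ‖(2 : ℝ) • f - g i‖) U (𝓝 (2 * ‖f‖))) :
    ∃ y, Tendsto (fun i => toWeakSpace ℝ (Lp E 1 μ) (g i)) U (𝓝 y) := by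
  choose φ φ_le norm_sub_φ using fun i => exists_ae_norm_le_two_mul_norm_sub_le f (g i)
  have φ_mem (i : ι) : toWeakSpace ℝ _ (φ i) ∈
      closure (toWeakSpace ℝ (Lp E 1 μ) '' {φ | ∀ᵐ x ∂μ, ‖φ x‖ ≤ 2 * ‖f x‖}) :=
    subset_closure ⟨φ i, φ_le i, rfl⟩
  obtain ⟨y, -, hy⟩ := (isCompact_closure_toWeakSpace_ae_norm_le
    ((L1.integrable_coeFn f).norm.const_mul 2)).ultrafilter_le_nhds
    (U.map fun i => toWeakSpace ℝ _ (φ i)) (tendsto_principal.2 (.of_forall φ_mem))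
  have error_tendsto : Tendsto (fun i => g i - φ i) U (𝓝 0) := by
    refine squeeze_zero_norm norm_sub_φ ?_
    simpa using (hg.sub_const (2 * ‖f‖)).div_const 2
  have weak_error := ((toWeakSpaceCLM ℝ (Lp E 1 μ)).continuous.tendsto 0).comp error_tendsto
  rw [map_zero] at weak_error
  refine ⟨y, ?_⟩
  simpa using weak_error.add hy

end L1

theorem weak_convergence_of_midpoint_tendsto_extremePoint_L1_general
    {Ω E : Type*} [MeasurableSpace Ω] (μ : Measure Ω) [NormedAddCommGroup E]
    [InnerProductSpace ℝ E] [CompleteSpace E]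
    (X : Submodule ℝ (Lp E 1 μ)) (hX : IsClosed (X : Set (Lp E 1 μ)))
    (f : X) (hf : f ∈ Set.extremePoints ℝ (Metric.closedBall (0 : X) 1))
    {ι : Type*} {l : Filter ι} (g h : ι → X)
    (hg : ∀ᶠ i in l, g i ∈ Metric.closedBall (0 : X) 1)
    (hh : ∀ᶠ i in l, h i ∈ Metric.closedBall (0 : X) 1)
    (hmid : Tendsto (fun i => (1 / 2 : ℝ) • (g i + h i)) l (𝓝 f)) :
    ∀ Λ : X →L[ℝ] ℝ, Tendsto (fun i => Λ (g i)) l (𝓝 (Λ f)) := by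
  let w := toWeakSpace ℝ X
  have norms_tendsto : Tendsto (fun i => ‖g i‖ + ‖(2 : ℝ) • f - g i‖) l (𝓝 (2 * ‖f‖)) := by
    have hball := closedBall_subset_closedBall_norm_of_mem_extremePoints hf
    exact tendsto_norm_add_norm_two_smul_sub (hg.mono fun i hi => by simpa using hball hi)
      (hh.mono fun i hi => by simpa using hball hi) hmid
  have weak_limits (U : Ultrafilter ι) (hU : ↑U ≤ l) : ∃ y, Tendsto (fun i => w (g i)) U (𝓝 y) :=
    exists_tendsto_toWeakSpace_of_isClosed_submodule hX
      (exists_tendsto_toWeakSpace_of_tendsto_norm_add_norm (f := f.1) (norms_tendsto.mono_left hU))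
  have mid_tendsto : Tendsto (fun i => (1 / 2 : ℝ) • (w (g i) + w (h i))) l (𝓝 (w f)) :=
    ((toWeakSpaceCLM ℝ X).continuous.tendsto f).comp hmid
  have f_extreme : w f ∈ (w '' Metric.closedBall 0 1).extremePoints ℝ := by
    rw [← image_extremePoints]
    exact Set.mem_image_of_mem w hf
  have weak_tendsto : Tendsto (fun i => w (g i)) l (𝓝 (w f)) :=
    tendsto_of_tendsto_midpoint_extremePoint
      (isClosed_toWeakSpace_image (convex_closedBall 0 1) Metric.isClosed_closedBall) f_extreme
      (hg.mono fun _ => Set.mem_image_of_mem w) (hh.mono fun _ => Set.mem_image_of_mem w)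
      mid_tendsto weak_limits
  exact fun Λ => ((WeakBilin.eval_continuous _ Λ).tendsto _).comp weak_tendsto

/-- If `f` is an extreme point of the closed unit ball of a closed subspace `X` of `L¹(μ)`,
and `(gₙ)`, `(hₙ)` are sequences in the unit ball with `½(gₙ + hₙ) → f` in norm, then
`(gₙ)` converges weakly to `f`. -/
theorem weak_convergence_of_midpoint_tendsto_extremePoint_L1
    {Ω : Type*} [MeasurableSpace Ω] (μ : Measure Ω)
    (X : Submodule ℝ (Lp ℝ 1 μ)) (hX : IsClosed (X : Set (Lp ℝ 1 μ)))
    (f : X) (hf : f ∈ Set.extremePoints ℝ (Metric.closedBall (0 : X) 1))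
    (g h : ℕ → X)
    (hg : ∀ n, g n ∈ Metric.closedBall (0 : X) 1)
    (hh : ∀ n, h n ∈ Metric.closedBall (0 : X) 1)
    (hmid : Tendsto (fun n => (1 / 2 : ℝ) • (g n + h n)) atTop (𝓝 f)) :
    ∀ Λ : X →L[ℝ] ℝ, Tendsto (fun n => Λ (g n)) atTop (𝓝 (Λ f)) :=
  weak_convergence_of_midpoint_tendsto_extremePoint_L1_general μ X hX f hf g h
    (.of_forall hg) (.of_forall hh) hmid
end

section
/- Let μ be a probability measure, let X be a closed linear subspace of L¹(μ), and let f be an extreme point of the closed unit ball of X. Suppose (gₙ) and (hₙ) are sequences in X with gₙ + hₙ = 2f for every n, ‖gₙ‖₁ → 1 and ‖hₙ‖₁ → 1. Then the family {gₙ : n ∈ ℕ} is equi-integrable: for every ε > 0 there exists δ > 0 such that ∫_A |gₙ| dμ ≤ ε for every n and every measurable set A with μ(A) ≤ δ. -/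
open MeasureTheory Filter Topology

/-! If `g + h = 2f`, then `‖f‖ ≤ (‖g‖ + ‖h‖) / 2` pointwise, so the excess
`ψ = (‖g‖ + ‖h‖) / 2 - ‖f‖` is nonnegative, and its integral is `(‖g‖₁ + ‖h‖₁) / 2 - ‖f‖₁`.
Moreover `‖g‖ ≤ 2‖f‖ + ψ` pointwise, so the mass of `g` on a set is at most that of `2‖f‖` plus
`∫ ψ`. An extreme point of the unit ball of a nonzero space has norm `1`, so these errors tend to
zero along the sequence; the finitely many `gₙ` whose error is not yet small are handled one by one,
by absolute continuity of their integrals. -/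

lemma eventually_forall_lt_of_le_add_of_tendsto_cofinite {α ι : Type*} {l : Filter α}
    {F : ι → α → ℝ} {G : α → ℝ} {e : ι → ℝ} (hF : ∀ i, Tendsto (F i) l (𝓝 0))
    (hG : Tendsto G l (𝓝 0)) (he : Tendsto e cofinite (𝓝 0))
    (hle : ∀ i a, F i a ≤ G a + e i) {ε : ℝ} (hε : 0 < ε) :
    ∀ᶠ a in l, ∀ i, F i a < ε := by
  have hfinite : {i | ¬e i < ε / 2}.Finite :=
    eventually_cofinite.1 (he.eventually_lt_const (half_pos hε))
  have hexceptional : ∀ᶠ a in l, ∀ i ∈ {i | ¬e i < ε / 2}, F i a < ε :=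
    (eventually_all_finite hfinite).2 fun i _ ↦ (hF i).eventually_lt_const hε
  filter_upwards [hexceptional, hG.eventually_lt_const (half_pos hε)] with a hFa hGa i
  by_cases hi : e i < ε / 2
  · linarith [hle i a]
  · exact hFa i hi

section Measure

variable {Ω : Type*} [MeasurableSpace Ω] {μ : Measure Ω}

lemma eventually_comap_measure_nhds_zero_iff {p : Set Ω → Prop} :
    (∀ᶠ A in comap μ (𝓝 0), p A) ↔ ∃ δ > (0 : ℝ), ∀ A, μ A ≤ ENNReal.ofReal δ → p A := by
  rw [(ENNReal.nhds_zero_basis_Iic.comap μ).eventually_iff]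
  constructor
  · rintro ⟨η, hη, hp⟩
    obtain ⟨δ, -, hδ, hδη⟩ := ENNReal.lt_iff_exists_real_btwn.1 hη
    exact ⟨δ, ENNReal.ofReal_pos.1 hδ, fun A hA ↦ hp (hA.trans hδη.le)⟩
  · rintro ⟨δ, hδ, hp⟩
    exact ⟨ENNReal.ofReal δ, ENNReal.ofReal_pos.2 hδ, fun A hA ↦ hp A hA⟩

variable {E : Type*} [NormedAddCommGroup E] [NormedSpace ℝ E]

lemma setIntegral_norm_le_of_add_eq_two_smul {f g h : Ω → E} (hf : Integrable f μ)
    (hg : Integrable g μ) (hh : Integrable h μ) (hsum : g + h =ᵐ[μ] (2 : ℝ) • f) (A : Set Ω) :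
    ∫ a in A, ‖g a‖ ∂μ ≤ 2 * ∫ a in A, ‖f a‖ ∂μ +
      ((∫ a, ‖g a‖ ∂μ + ∫ a, ‖h a‖ ∂μ) / 2 - ∫ a, ‖f a‖ ∂μ) := by
  let excess : Ω → ℝ := fun a ↦ (‖g a‖ + ‖h a‖) / 2 - ‖f a‖
  have hmean : Integrable (fun a ↦ (‖g a‖ + ‖h a‖) / 2) μ := (hg.norm.add hh.norm).div_const 2
  have hexcess : Integrable excess μ := hmean.sub hf.norm
  have htwo : Integrable (fun a ↦ 2 * ‖f a‖) μ := hf.norm.const_mul 2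
  have hnorm : ∀ᵐ a ∂μ, ‖g a + h a‖ = 2 * ‖f a‖ := by
    filter_upwards [hsum] with a ha
    simpa [norm_smul] using congrArg norm ha
  have hexcess_nonneg : 0 ≤ᵐ[μ] excess := by
    filter_upwards [hnorm] with a ha
    simp only [excess, Pi.zero_apply]
    linarith [norm_add_le (g a) (h a)]
  have hdom : ∀ᵐ a ∂μ, ‖g a‖ ≤ 2 * ‖f a‖ + excess a := by
    filter_upwards [hnorm] with a ha
    simp only [excess]
    linarith [norm_le_add_norm_add (g a) (h a)]
  calc ∫ a in A, ‖g a‖ ∂μ ≤ ∫ a in A, (2 * ‖f a‖ + excess a) ∂μ :=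
        setIntegral_mono_ae hg.norm.integrableOn (htwo.add hexcess).integrableOn hdom
    _ = 2 * ∫ a in A, ‖f a‖ ∂μ + ∫ a in A, excess a ∂μ := by
        rw [integral_add htwo.integrableOn hexcess.integrableOn, integral_const_mul]
    _ ≤ 2 * ∫ a in A, ‖f a‖ ∂μ + ∫ a, excess a ∂μ :=
        add_le_add le_rfl (setIntegral_le_integral hexcess hexcess_nonneg)
    _ = _ := by
        rw [integral_sub hmean hf.norm, integral_div, integral_add hg.norm hh.norm]

theorem equiIntegrable_of_extremePoint_L1_general {ι : Type*} {f : Lp E 1 μ} {g h : ι → Lp E 1 μ}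
    (hsum : ∀ i, g i + h i = (2 : ℝ) • f)
    (hnorm : Tendsto (fun i ↦ ‖g i‖ + ‖h i‖) cofinite (𝓝 (2 * ‖f‖))) {ε : ℝ} (hε : 0 < ε) :
    ∃ δ > (0 : ℝ), ∀ i, ∀ A : Set Ω, μ A ≤ ENNReal.ofReal δ → ∫ a in A, ‖g i a‖ ∂μ < ε := by
  have hint (u : Lp E 1 μ) : Integrable u μ := L1.integrable_coeFn u
  have hmass (u : Lp E 1 μ) : Tendsto (fun A ↦ ∫ a in A, ‖u a‖ ∂μ) (comap μ (𝓝 0)) (𝓝 0) :=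
    (hint u).norm.tendsto_setIntegral_nhds_zero tendsto_comap
  have herror : Tendsto (fun i ↦ (‖g i‖ + ‖h i‖) / 2 - ‖f‖) cofinite (𝓝 0) := by
    simpa using (hnorm.div_const 2).sub_const ‖f‖
  have hbound (i : ι) (A : Set Ω) :
      ∫ a in A, ‖g i a‖ ∂μ ≤ 2 * ∫ a in A, ‖f a‖ ∂μ + ((‖g i‖ + ‖h i‖) / 2 - ‖f‖) := by
    have hsum_ae : ⇑(g i) + ⇑(h i) =ᵐ[μ] (2 : ℝ) • ⇑f :=
      (Lp.coeFn_add (g i) (h i)).symm.trans (hsum i ▸ Lp.coeFn_smul 2 f)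
    simpa only [L1.norm_eq_integral_norm] using
      setIntegral_norm_le_of_add_eq_two_smul (hint f) (hint (g i)) (hint (h i)) hsum_ae A
  have hf_zero : Tendsto (fun A ↦ 2 * ∫ a in A, ‖f a‖ ∂μ) (comap μ (𝓝 0)) (𝓝 0) := by
    simpa using (hmass f).const_mul 2
  obtain ⟨δ, hδ, hsmall⟩ := eventually_comap_measure_nhds_zero_iff.1 <|
    eventually_forall_lt_of_le_add_of_tendsto_cofinite
      (fun i ↦ hmass (g i)) hf_zero herror hbound hε
  exact ⟨δ, hδ, fun i A hA ↦ hsmall A hA i⟩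

end Measure

/-- Let `μ` be a probability measure, `X` a closed subspace of `L¹(μ)`, and `f` an extreme
point of the closed unit ball of `X`. If `gₙ + hₙ = 2f` with `‖gₙ‖₁ → 1` and `‖hₙ‖₁ → 1`,
then the family `{gₙ}` is equi-integrable. -/
theorem equiIntegrable_of_extremePoint_L1
    {Ω : Type*} [MeasurableSpace Ω] (μ : Measure Ω) [IsProbabilityMeasure μ]
    (X : Submodule ℝ (Lp ℝ 1 μ)) (hX : IsClosed (X : Set (Lp ℝ 1 μ)))
    (f : X) (hf : f ∈ Set.extremePoints ℝ (Metric.closedBall (0 : X) 1))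
    (g h : ℕ → X)
    (hsum : ∀ n, g n + h n = (2 : ℝ) • f)
    (hg : Tendsto (fun n => ‖g n‖) atTop (𝓝 1))
    (hh : Tendsto (fun n => ‖h n‖) atTop (𝓝 1)) :
    ∀ ε > (0 : ℝ), ∃ δ > (0 : ℝ), ∀ n, ∀ A : Set Ω, MeasurableSet A →
      μ A ≤ ENNReal.ofReal δ →
      ∫ a in A, |((g n : Lp ℝ 1 μ) : Ω → ℝ) a| ∂μ ≤ ε := by
  intro ε hε
  obtain ⟨n, hn⟩ := (hg.eventually_const_lt one_pos).exists
  have : Nontrivial X := nontrivial_of_ne (g n) 0 (norm_pos_iff.1 hn)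
  have hf_norm : ‖f‖ = 1 := mem_sphere_zero_iff_norm.1 (extremePoints_closedBall_subset_sphere hf)
  have hnorm : Tendsto (fun n ↦ ‖g n‖ + ‖h n‖) cofinite (𝓝 (2 * ‖f‖)) := by
    rw [Nat.cofinite_eq_atTop, hf_norm, two_mul]
    exact hg.add hh
  obtain ⟨δ, hδ, hsmall⟩ := equiIntegrable_of_extremePoint_L1_general
    (fun n ↦ congrArg Subtype.val (hsum n)) hnorm hε
  exact ⟨δ, hδ, fun n A _ hA ↦ (hsmall n A hA).le⟩
end

section
/- Let u = (uᵢ) and v = (vᵢ) be elements of ℓ₁ (real absolutely summable sequences indexed by ℕ), and let φ : ℝ → ℝ be twice continuously differentiable with compact support. Then ∫_ℝ ‖u − t v‖₁ · φ''(t) dt = Σ_{i : vᵢ ≠ 0} 2|vᵢ| · φ(uᵢ/vᵢ). In other words, the second distributional derivative of the map t ↦ ‖u − tv‖₁ is the discrete measure Σ_{i : vᵢ ≠ 0} 2|vᵢ| δ_{uᵢ/vᵢ}, concentrated on the countable set {uᵢ/vᵢ : i ∈ ℕ, vᵢ ≠ 0}. -/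
/-!
Write `‖u - t • v‖ = ∑ i, |u i - t * v i|` and exchange the sum with the integral, which is
legitimate because `|u i - t * v i| ≤ |u i| + |t| * |v i|`, where `u` and `v` are summable and
`φ''` and `t ↦ t φ''(t)` are integrable. Each coordinate then rescales to the one-dimensional
fact that `|t - c|` has second distributional derivative `2 δ_c`; this follows on each side of `c`
from the antiderivative `(t - c) φ'(t) - φ(t)` of `(t - c) φ''(t)`.
-/

open MeasureTheory Set Function

section OneDimensional

variable {E : Type*} [NormedAddCommGroup E] [NormedSpace ℝ E] {f φ : ℝ → E}

theorem integrable_smul_deriv (hf : ContDiff ℝ 1 f) (hfc : HasCompactSupport f) {g : ℝ → ℝ}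
    (hg : Continuous g) : Integrable fun t ↦ g t • deriv f t :=
  (hg.smul (hf.continuous_deriv le_rfl)).integrable_of_hasCompactSupport hfc.deriv.smul_left

theorem integrable_deriv (hf : ContDiff ℝ 1 f) (hfc : HasCompactSupport f) :
    Integrable (deriv f) :=
  (hf.continuous_deriv le_rfl).integrable_of_hasCompactSupport hfc.deriv

theorem integral_deriv_eq_zero (hf : ContDiff ℝ 1 f) (hfc : HasCompactSupport f) :
    ∫ t, deriv f t = 0 :=
  integral_eq_zero_of_hasDerivAt_of_integrable
    (fun t ↦ (hf.differentiable one_ne_zero t).hasDerivAt)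
    (integrable_deriv hf hfc) (hf.continuous.integrable_of_hasCompactSupport hfc)

theorem contDiff_sub_smul_deriv_sub (hφ : ContDiff ℝ 2 φ) (c : ℝ) :
    ContDiff ℝ 1 fun t ↦ (t - c) • deriv φ t - φ t :=
  ((contDiff_id.sub contDiff_const).smul hφ.deriv').sub (hφ.of_le one_le_two)

theorem hasCompactSupport_sub_smul_deriv_sub (hφc : HasCompactSupport φ) (c : ℝ) :
    HasCompactSupport fun t ↦ (t - c) • deriv φ t - φ t :=
  hφc.deriv.smul_left.sub hφc

theorem deriv_sub_smul_deriv_sub (hφ : ContDiff ℝ 2 φ) (c : ℝ) :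
    deriv (fun t ↦ (t - c) • deriv φ t - φ t) = fun t ↦ (t - c) • deriv (deriv φ) t := by
  ext t
  have hφ' : HasDerivAt φ (deriv φ t) t := (hφ.differentiable two_ne_zero t).hasDerivAt
  have hφ'' : HasDerivAt (deriv φ) (deriv (deriv φ) t) t :=
    (hφ.differentiable_deriv_two t).hasDerivAt
  refine HasDerivAt.deriv ?_
  convert! (((hasDerivAt_id' t).sub_const c).smul hφ'').sub hφ' using 1
  rw [one_smul, add_sub_cancel_right]

variable [CompleteSpace E]

theorem integral_Ioi_sub_smul_deriv_deriv (hφ : ContDiff ℝ 2 φ) (hφc : HasCompactSupport φ)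
    (c : ℝ) : ∫ t in Ioi c, (t - c) • deriv (deriv φ) t = φ c := by
  rw [← deriv_sub_smul_deriv_sub hφ, HasCompactSupport.integral_Ioi_deriv_eq
    (contDiff_sub_smul_deriv_sub hφ c) (hasCompactSupport_sub_smul_deriv_sub hφc c)]
  simp

theorem integral_Iic_sub_smul_deriv_deriv (hφ : ContDiff ℝ 2 φ) (hφc : HasCompactSupport φ)
    (c : ℝ) : ∫ t in Iic c, (t - c) • deriv (deriv φ) t = -φ c := by
  rw [← deriv_sub_smul_deriv_sub hφ, HasCompactSupport.integral_Iic_deriv_eq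
    (contDiff_sub_smul_deriv_sub hφ c) (hasCompactSupport_sub_smul_deriv_sub hφc c)]
  simp

theorem integral_abs_sub_smul_deriv_deriv (hφ : ContDiff ℝ 2 φ) (hφc : HasCompactSupport φ)
    (c : ℝ) : ∫ t, |t - c| • deriv (deriv φ) t = (2 : ℝ) • φ c := by
  have hintegrable : Integrable fun t ↦ |t - c| • deriv (deriv φ) t :=
    integrable_smul_deriv hφ.deriv' hφc.deriv (by fun_prop)
  have hright : ∫ t in Ioi c, |t - c| • deriv (deriv φ) t = φ c := by
    rw [← integral_Ioi_sub_smul_deriv_deriv hφ hφc c]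
    refine setIntegral_congr_fun measurableSet_Ioi fun t (ht : c < t) ↦ ?_
    simp only [abs_of_pos (sub_pos.2 ht)]
  have hleft : ∫ t in Iic c, |t - c| • deriv (deriv φ) t = φ c := by
    rw [← neg_neg (φ c), ← integral_Iic_sub_smul_deriv_deriv hφ hφc c, ← integral_neg]
    refine setIntegral_congr_fun measurableSet_Iic fun t (ht : t ≤ c) ↦ ?_
    simp only [abs_of_nonpos (sub_nonpos.2 ht), neg_smul]
  rw [← intervalIntegral.integral_Iic_add_Ioi hintegrable.integrableOn
    hintegrable.integrableOn, hleft, hright, two_smul]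

theorem integral_abs_sub_mul_smul_deriv_deriv (hφ : ContDiff ℝ 2 φ) (hφc : HasCompactSupport φ)
    (a b : ℝ) : ∫ t, |a - t * b| • deriv (deriv φ) t = (2 * |b|) • φ (a / b) := by
  rcases eq_or_ne b 0 with rfl | hb
  · simp [integral_smul, integral_deriv_eq_zero hφ.deriv' hφc.deriv]
  · have hscale (t : ℝ) : |a - t * b| = |b| * |t - a / b| := by
      rw [← abs_mul, abs_sub_comm, mul_sub, mul_div_cancel₀ a hb, mul_comm t]
    simp_rw [hscale, mul_smul]
    rw [integral_smul, integral_abs_sub_smul_deriv_deriv hφ hφc, smul_comm]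

end OneDimensional

section Interchange

variable {ι E : Type*} [NormedAddCommGroup E] [NormedSpace ℝ E]

/- An uncountable family of functions vanishing almost everywhere can have a sum with nonzero
integral, for instance the indicators of the points of `[0, 1]`. -/
theorem integral_tsum_of_countable_support {α : Type*} {_ : MeasurableSpace α} {μ : Measure α}
    {F : ι → α → E} (hF : (support F).Countable) (hF_int : ∀ i, Integrable (F i) μ)
    (hF_sum : Summable fun i ↦ ∫ x, ‖F i x‖ ∂μ) :
    ∫ x, ∑' i, F i x ∂μ = ∑' i, ∫ x, F i x ∂μ := by
  have : Countable (support F) := hF.to_subtype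
  have hpointwise (x : α) : ∑' i : support F, F i x = ∑' i, F i x :=
    tsum_subtype_eq_of_support_subset (f := (F · x)) fun i hi h ↦ hi (congrFun h x)
  have hintegral : ∑' i : support F, ∫ x, F i x ∂μ = ∑' i, ∫ x, F i x ∂μ :=
    tsum_subtype_eq_of_support_subset (f := fun i ↦ ∫ x, F i x ∂μ) fun i hi h ↦
      hi (by simp [h])
  simp_rw [← hpointwise, ← hintegral]
  exact (integral_tsum_of_summable_integral_norm (fun i : support F ↦ hF_int i)
    (hF_sum.subtype (support F))).symm

theorem norm_abs_sub_mul_smul_le (a b t : ℝ) (y : E) :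
    ‖|a - t * b| • y‖ ≤ |a| * ‖y‖ + |b| * ‖t • y‖ :=
  calc
    ‖|a - t * b| • y‖ = |a - t * b| * ‖y‖ := by rw [norm_smul, Real.norm_eq_abs, abs_abs]
    _ ≤ (|a| + |t * b|) * ‖y‖ := by gcongr; exact abs_sub a (t * b)
    _ = |a| * ‖y‖ + |b| * ‖t • y‖ := by rw [norm_smul, Real.norm_eq_abs, abs_mul]; ring

variable {μ : Measure ℝ} {f : ℝ → E}

theorem integrable_abs_sub_mul_smul (hf : Integrable f μ) (hf' : Integrable (fun t ↦ t • f t) μ)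
    (a b : ℝ) : Integrable (fun t ↦ |a - t * b| • f t) μ :=
  ((hf.norm.const_mul |a|).add (hf'.norm.const_mul |b|)).mono'
    (Continuous.aestronglyMeasurable (by fun_prop) |>.smul hf.aestronglyMeasurable)
    (.of_forall fun t ↦ norm_abs_sub_mul_smul_le a b t (f t))

theorem integral_norm_abs_sub_mul_smul_le (hf : Integrable f μ)
    (hf' : Integrable (fun t ↦ t • f t) μ) (a b : ℝ) :
    ∫ t, ‖|a - t * b| • f t‖ ∂μ ≤ |a| * (∫ t, ‖f t‖ ∂μ) + |b| * ∫ t, ‖t • f t‖ ∂μ := by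
  have hfa := hf.norm.const_mul |a|
  have hfb := hf'.norm.const_mul |b|
  rw [← integral_const_mul, ← integral_const_mul, ← integral_add hfa hfb]
  exact integral_mono (integrable_abs_sub_mul_smul hf hf' a b).norm (hfa.add hfb) fun t ↦
    norm_abs_sub_mul_smul_le a b t (f t)

theorem integral_tsum_abs_sub_mul_smul (hf : Integrable f μ) (hf' : Integrable (fun t ↦ t • f t) μ)
    {a b : ι → ℝ} (ha : Summable a) (hb : Summable b) :
    ∫ t, (∑' i, |a i - t * b i|) • f t ∂μ = ∑' i, ∫ t, |a i - t * b i| • f t ∂μ := by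
  have hsummable (t : ℝ) : Summable fun i ↦ |a i - t * b i| := (ha.sub (hb.mul_left t)).abs
  simp_rw [← (hsummable _).tsum_smul_const]
  refine integral_tsum_of_countable_support ?_
    (fun i ↦ integrable_abs_sub_mul_smul hf hf' (a i) (b i)) ?_
  · refine (ha.countable_support.union hb.countable_support).mono fun i hi ↦ ?_
    by_contra hzero
    obtain ⟨hai, hbi⟩ : a i = 0 ∧ b i = 0 := by simpa using hzero
    exact hi (funext fun t ↦ by simp [hai, hbi])
  · exact .of_nonneg_of_le (fun i ↦ by positivity)
      (fun i ↦ integral_norm_abs_sub_mul_smul_le hf hf' (a i) (b i))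
      ((ha.abs.mul_right _).add (hb.abs.mul_right _))

end Interchange

section LOne

variable {ι : Type*}

theorem lp_one_norm_eq_tsum {E : ι → Type*} [∀ i, NormedAddCommGroup (E i)] (w : lp E 1) :
    ‖w‖ = ∑' i, ‖w i‖ := by
  simp only [lp.norm_eq_tsum_rpow (p := 1) (by norm_num), ENNReal.toReal_one, Real.rpow_one,
    div_one]

theorem lp_one_summable_norm {E : ι → Type*} [∀ i, NormedAddCommGroup (E i)] (w : lp E 1) :
    Summable fun i ↦ ‖w i‖ := by
  simpa using (lp.memℓp w).summable (by norm_num)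

theorem secondDeriv_distributional_norm_sub_smul_l1_general
    {E : Type*} [NormedAddCommGroup E] [NormedSpace ℝ E] [CompleteSpace E]
    (u v : lp (fun _ : ι ↦ ℝ) 1)
    (φ : ℝ → E) (hφ : ContDiff ℝ 2 φ) (hφc : HasCompactSupport φ) :
    ∫ t : ℝ, ‖u - t • v‖ • deriv (deriv φ) t = ∑' i, (2 * |v i|) • φ (u i / v i) := by
  have hφ' : ContDiff ℝ 1 (deriv φ) := hφ.deriv'
  have hφ'' : Integrable (deriv (deriv φ)) := integrable_deriv hφ' hφc.deriv
  have htφ'' : Integrable fun t ↦ t • deriv (deriv φ) t :=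
    integrable_smul_deriv hφ' hφc.deriv continuous_id
  calc
    ∫ t : ℝ, ‖u - t • v‖ • deriv (deriv φ) t
      = ∫ t : ℝ, (∑' i, |u i - t * v i|) • deriv (deriv φ) t := by
        simp only [lp_one_norm_eq_tsum, lp.coeFn_sub, lp.coeFn_smul, Pi.sub_apply, Pi.smul_apply,
          smul_eq_mul, Real.norm_eq_abs]
    _ = ∑' i, ∫ t : ℝ, |u i - t * v i| • deriv (deriv φ) t :=
        integral_tsum_abs_sub_mul_smul hφ'' htφ'' (lp_one_summable_norm u).of_norm
          (lp_one_summable_norm v).of_norm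
    _ = ∑' i, (2 * |v i|) • φ (u i / v i) := by
        simp_rw [integral_abs_sub_mul_smul_deriv_deriv hφ hφc]

end LOne

/-- For `u, v ∈ ℓ₁(ℕ)` and a `C²` test function `φ`, the second distributional derivative
of `t ↦ ‖u − t v‖₁` is the discrete measure `Σ_{i} 2|vᵢ| δ_{uᵢ/vᵢ}` (terms with `vᵢ = 0`
vanish): `∫ ‖u − t v‖₁ φ''(t) dt = Σᵢ 2|vᵢ| φ(uᵢ/vᵢ)`. -/
theorem secondDeriv_distributional_norm_sub_smul_l1
    (u v : lp (fun _ : ℕ => ℝ) 1)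
    (φ : ℝ → ℝ) (hφ : ContDiff ℝ 2 φ) (hφc : HasCompactSupport φ) :
    ∫ t : ℝ, ‖u - t • v‖ * deriv (deriv φ) t =
      ∑' i : ℕ, 2 * |v i| * φ (u i / v i) :=
  secondDeriv_distributional_norm_sub_smul_l1_general u v φ hφ hφc
end

section
/- Let Γ be any index set, let b > 0, let f : [0,b] → ℝ be Lebesgue-integrable, and let K ≥ 0, c ≥ 0 be constants. Suppose there exist u, v ∈ ℓ₁(Γ) such that ‖u − t v‖₁ = ∫_0^b |f(s) − t| ds + K + c|t| for every t ∈ ℝ. Then f is essentially countably valued: there exists a countable set D ⊆ ℝ such that λ({s ∈ [0,b] : f(s) ∉ D}) = 0. -/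
/-!
The function `t ↦ ∫ |x - t| dμ` has right derivative `μ (-∞, t] - μ (t, ∞)`, so it determines a
finite measure `μ` on `ℝ`, even if it is only known up to an additive constant. Up to constants,
the norm `‖u - t v‖₁ = ∑_{v i ≠ 0} |v i| |u i / v i - t| + ∑_{v i = 0} |u i|` is of this form for
the measure with mass `|v i|` at each `u i / v i`, while `∫ |f - t| dμ + c |t|` is of this form for
the law of `f` plus a mass `c` at `0` (moved to the other side when `c < 0`). Hence the law of `f`
is concentrated on the countably many points `u i / v i` and `0`.
-/

open Filter Function MeasureTheory Set Topology

section IntegralAbsSub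

theorem hasDerivWithinAt_abs_sub_Ioi (x t : ℝ) :
    HasDerivWithinAt (fun s ↦ |x - s|) ((Iic t).indicator 1 x - (Ioi t).indicator 1 x)
      (Ioi t) t := by
  rcases le_or_gt x t with hxt | htx
  · have hderiv : HasDerivWithinAt (fun s ↦ s - x) 1 (Ioi t) t :=
      (hasDerivWithinAt_id t _).sub_const x
    have habs : ∀ s, t ≤ s → |x - s| = s - x := fun s hs ↦ by
      rw [abs_sub_comm, abs_of_nonneg (by linarith)]
    simpa [hxt, hxt.not_gt] using hderiv.congr (fun s hs ↦ habs s (le_of_lt hs)) (habs t le_rfl)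
  · simpa [htx, htx.not_ge] using
      ((hasDerivAt_abs_pos (sub_pos.2 htx)).comp_const_sub x t).hasDerivWithinAt

theorem norm_slope_abs_sub_le_one (x t s : ℝ) : ‖slope (fun r ↦ |x - r|) t s‖ ≤ 1 := by
  rw [slope_def_field, norm_div]
  refine div_le_one_of_le₀ ?_ (norm_nonneg _)
  calc ‖|x - s| - |x - t|‖ ≤ ‖(x - s) - (x - t)‖ := norm_abs_sub_abs _ _
    _ = ‖s - t‖ := by rw [sub_sub_sub_cancel_left, norm_sub_rev]

variable {μ ν : Measure ℝ} [IsFiniteMeasure μ] [IsFiniteMeasure ν]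

theorem integrable_abs_sub (hμ : Integrable id μ) (t : ℝ) : Integrable (fun x ↦ |x - t|) μ :=
  (hμ.sub (integrable_const t)).abs

theorem hasDerivWithinAt_integral_abs_sub (hμ : Integrable id μ) (t : ℝ) :
    HasDerivWithinAt (fun s ↦ ∫ x, |x - s| ∂μ) (μ.real (Iic t) - μ.real (Ioi t)) (Ioi t) t := by
  have hslope (s : ℝ) : slope (fun r ↦ ∫ x, |x - r| ∂μ) t s =
      ∫ x, slope (fun r ↦ |x - r|) t s ∂μ := by
    simp only [slope_def_field]
    rw [integral_div, integral_sub (integrable_abs_sub hμ s) (integrable_abs_sub hμ t)]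
  have hderiv : μ.real (Iic t) - μ.real (Ioi t) =
      ∫ x, ((Iic t).indicator 1 x - (Ioi t).indicator 1 x) ∂μ := by
    rw [integral_sub ((integrable_const 1).indicator measurableSet_Iic)
      ((integrable_const 1).indicator measurableSet_Ioi),
      integral_indicator_one measurableSet_Iic, integral_indicator_one measurableSet_Ioi]
  rw [hasDerivWithinAt_iff_tendsto_slope' self_notMem_Ioi, funext hslope, hderiv]
  refine tendsto_integral_filter_of_dominated_convergence (fun _ ↦ 1) ?_ ?_ (integrable_const 1) ?_
  · refine Eventually.of_forall fun s ↦ ?_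
    simp only [slope_def_field]
    fun_prop
  · exact Eventually.of_forall fun s ↦ ae_of_all _ fun x ↦ norm_slope_abs_sub_le_one x t s
  · exact ae_of_all _ fun x ↦ (hasDerivWithinAt_iff_tendsto_slope' self_notMem_Ioi).1
      (hasDerivWithinAt_abs_sub_Ioi x t)

theorem eq_of_integral_abs_sub_eq_add_const (hμ : Integrable id μ) (hν : Integrable id ν) (C : ℝ)
    (h : ∀ t, ∫ x, |x - t| ∂μ = ∫ x, |x - t| ∂ν + C) : μ = ν := by
  have hderiv (t : ℝ) : μ.real (Iic t) - μ.real (Ioi t) = ν.real (Iic t) - ν.real (Ioi t) := by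
    refine (uniqueDiffWithinAt_Ioi t).eq_deriv _ (hasDerivWithinAt_integral_abs_sub hμ t) ?_
    rw [funext h]
    exact (hasDerivWithinAt_integral_abs_sub hν t).add_const C
  have hIoc (ρ : Measure ℝ) [IsFiniteMeasure ρ] {a b : ℝ} (hab : a < b) :
      2 * ρ.real (Ioc a b) =
        (ρ.real (Iic b) - ρ.real (Ioi b)) - (ρ.real (Iic a) - ρ.real (Ioi a)) := by
    have hIic : ρ.real (Ioc a b) = ρ.real (Iic b) - ρ.real (Iic a) := by
      rw [← Iic_sdiff_Iic, measureReal_sdiff (Iic_subset_Iic.2 hab.le) measurableSet_Iic]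
    have hIoi : ρ.real (Ioc a b) = ρ.real (Ioi a) - ρ.real (Ioi b) := by
      rw [← Ioi_sdiff_Ioi, measureReal_sdiff (Ioi_subset_Ioi hab.le) measurableSet_Ioi]
    linarith
  refine Measure.ext_of_Ioc μ ν fun a b hab ↦ ?_
  rw [← measureReal_eq_measureReal_iff]
  linarith [hIoc μ hab, hIoc ν hab, hderiv a, hderiv b]

end IntegralAbsSub

section AddDirac

variable {μ : Measure ℝ}

theorem integrable_id_add_smul_dirac (hμ : Integrable id μ) (c a : ℝ) :
    Integrable id (μ + ENNReal.ofReal c • Measure.dirac a) :=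
  hμ.add_measure ((integrable_dirac (by simp)).smul_measure ENNReal.ofReal_ne_top)

theorem integral_abs_sub_add_smul_dirac [IsFiniteMeasure μ] (hμ : Integrable id μ)
    (c a t : ℝ) :
    ∫ x, |x - t| ∂(μ + ENNReal.ofReal c • Measure.dirac a) =
      ∫ x, |x - t| ∂μ + max c 0 * |a - t| := by
  rw [integral_add_measure (integrable_abs_sub hμ t)
    ((integrable_dirac (by simp)).smul_measure ENNReal.ofReal_ne_top), integral_smul_measure,
    integral_dirac, ENNReal.toReal_ofReal', smul_eq_mul]

end AddDirac

section RatioMeasure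

variable {Γ : Type*} {u v : Γ → ℝ}

/-- The purely atomic measure on `ℝ` with mass `|v i|` at `u i / v i` for each `i`; indices with
`v i = 0` contribute nothing. It represents `∑ i, |u i - t * v i|` as an integral of `|x - t|`, up
to a term not depending on `t`. -/
noncomputable def ratioMeasure (u v : Γ → ℝ) : Measure ℝ :=
  Measure.sum fun i ↦ ENNReal.ofReal |v i| • Measure.dirac (u i / v i)

theorem isFiniteMeasure_ratioMeasure (u : Γ → ℝ) (hv : Summable v) :
    IsFiniteMeasure (ratioMeasure u v) := by
  refine ⟨?_⟩
  simpa [ratioMeasure, Measure.sum_apply _ MeasurableSet.univ] using hv.abs.tsum_ofReal_lt_top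

theorem abs_mul_abs_div_sub {x y : ℝ} (hy : y ≠ 0) (t : ℝ) :
    |y| * |x / y - t| = |x - t * y| := by
  rw [← abs_mul, mul_sub, mul_div_cancel₀ _ hy, mul_comm t]

theorem integrable_id_ratioMeasure (hu : Summable u) (v : Γ → ℝ) :
    Integrable id (ratioMeasure u v) := by
  have hsum : Summable fun i ↦ |v i| * |u i / v i| := by
    refine hu.abs.of_nonneg_of_le (fun i ↦ by positivity) fun i ↦ ?_
    rcases eq_or_ne (v i) 0 with hi | hi
    · simp [hi]
    · simpa using (abs_mul_abs_div_sub (x := u i) hi 0).le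
  refine ⟨aestronglyMeasurable_id, ?_⟩
  simpa [HasFiniteIntegral, ratioMeasure, lintegral_sum_measure, Real.enorm_eq_ofReal_abs,
    ENNReal.ofReal_mul] using hsum.tsum_ofReal_lt_top

theorem ae_ratioMeasure_mem (u : Γ → ℝ) (hv : v.support.Countable) :
    ∀ᵐ x ∂ratioMeasure u v, x ∈ (u / v) '' v.support := by
  have hmeas : MeasurableSet ((u / v) '' v.support) := (hv.image _).measurableSet
  refine (Measure.ae_sum_iff' hmeas).2 fun i ↦ ?_
  rcases eq_or_ne (v i) 0 with hi | hi
  · simp [hi]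
  · exact Measure.ae_smul_measure ((ae_dirac_iff hmeas).2 (mem_image_of_mem (u / v) hi)) _

theorem tsum_abs_sub_mul_eq_integral_ratioMeasure (hu : Summable u) (hv : Summable v) (t : ℝ) :
    ∑' i, |u i - t * v i| =
      ∫ x, |x - t| ∂ratioMeasure u v + ∑' i, (v.support)ᶜ.indicator (fun i ↦ |u i|) i := by
  have := isFiniteMeasure_ratioMeasure u hv
  have hint : HasSum (fun i ↦ |v i| * |u i / v i - t|) (∫ x, |x - t| ∂ratioMeasure u v) := by
    simpa [ratioMeasure] using
      hasSum_integral_measure (integrable_abs_sub (integrable_id_ratioMeasure hu v) t)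
  rw [← hint.tsum_eq, ← hint.summable.tsum_add (hu.abs.indicator _)]
  refine tsum_congr fun i ↦ ?_
  rcases eq_or_ne (v i) 0 with hi | hi
  · simp [hi]
  · simp [hi, abs_mul_abs_div_sub hi t]

end RatioMeasure

section LOne

variable {Γ : Type*}

theorem hasSum_abs_lp_one (w : lp (fun _ : Γ ↦ ℝ) 1) : HasSum (fun i ↦ |w i|) ‖w‖ := by
  simpa using lp.hasSum_norm (by simp) w

theorem summable_lp_one (w : lp (fun _ : Γ ↦ ℝ) 1) : Summable w :=
  (hasSum_abs_lp_one w).summable.of_abs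

theorem norm_sub_smul_eq_integral_ratioMeasure (u v : lp (fun _ : Γ ↦ ℝ) 1) (t : ℝ) :
    ‖u - t • v‖ =
      ∫ x, |x - t| ∂ratioMeasure u v + ∑' i, (support v)ᶜ.indicator (fun i ↦ |u i|) i := by
  rw [← tsum_abs_sub_mul_eq_integral_ratioMeasure (summable_lp_one u) (summable_lp_one v) t]
  exact (hasSum_abs_lp_one (u - t • v)).tsum_eq.symm

end LOne

section Main

variable {Γ Ω : Type*} [MeasurableSpace Ω] {μ : Measure Ω} [IsFiniteMeasure μ] {f : Ω → ℝ}

theorem ratioMeasure_add_eq_map_add (hf : Integrable f μ) (K c : ℝ) (u v : lp (fun _ : Γ ↦ ℝ) 1)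
    (h : ∀ t : ℝ, ‖u - t • v‖ = (∫ s, |f s - t| ∂μ) + K + c * |t|) :
    ratioMeasure u v + ENNReal.ofReal (-c) • Measure.dirac 0 =
      μ.map f + ENNReal.ofReal c • Measure.dirac 0 := by
  have := isFiniteMeasure_ratioMeasure u (summable_lp_one v)
  have hratio : Integrable id (ratioMeasure u v) := integrable_id_ratioMeasure (summable_lp_one u) v
  have hmap : Integrable id (μ.map f) :=
    (integrable_map_measure aestronglyMeasurable_id hf.aemeasurable).2 hf
  have hdirac (a : ℝ) : IsFiniteMeasure (ENNReal.ofReal a • Measure.dirac (0 : ℝ)) :=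
    Measure.smul_finite _ ENNReal.ofReal_ne_top
  refine eq_of_integral_abs_sub_eq_add_const (integrable_id_add_smul_dirac hratio _ _)
    (integrable_id_add_smul_dirac hmap _ _)
    (K - ∑' i, (support v)ᶜ.indicator (fun i ↦ |u i|) i) fun t ↦ ?_
  have hlaw : ∫ x, |x - t| ∂μ.map f = ∫ s, |f s - t| ∂μ :=
    integral_map hf.aemeasurable (by fun_prop)
  have hc : max c 0 * |t| - max (-c) 0 * |t| = c * |t| := by
    rw [← sub_mul, max_zero_sub_max_neg_zero_eq_self]
  rw [integral_abs_sub_add_smul_dirac hratio, integral_abs_sub_add_smul_dirac hmap, hlaw, zero_sub,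
    abs_neg]
  linarith [h t, norm_sub_smul_eq_integral_ratioMeasure u v t]

theorem essentially_countably_valued_of_l1_norm_formula_general (hf : Integrable f μ) (K c : ℝ)
    (u v : lp (fun _ : Γ ↦ ℝ) 1)
    (h : ∀ t : ℝ, ‖u - t • v‖ = (∫ s, |f s - t| ∂μ) + K + c * |t|) :
    ∃ D : Set ℝ, D.Countable ∧ ∀ᵐ s ∂μ, f s ∈ D := by
  have hsupp : (support v).Countable := (summable_lp_one v).countable_support
  set D : Set ℝ := insert 0 ((u / v : Γ → ℝ) '' support v)
  have hD : D.Countable := (hsupp.image _).insert 0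
  have hratio : ∀ᵐ x ∂ratioMeasure u v, x ∈ D :=
    (ae_ratioMeasure_mem u hsupp).mono fun _ ↦ mem_insert_of_mem 0
  have hdirac : ∀ᵐ x ∂(ENNReal.ofReal (-c) • Measure.dirac 0), x ∈ D :=
    Measure.ae_smul_measure ((ae_dirac_iff hD.measurableSet).2 (mem_insert 0 _)) _
  have hsum : ∀ᵐ x ∂(μ.map f + ENNReal.ofReal c • Measure.dirac 0), x ∈ D := by
    rw [← ratioMeasure_add_eq_map_add hf K c u v h]
    exact ae_add_measure_iff.2 ⟨hratio, hdirac⟩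
  exact ⟨D, hD, ae_of_ae_map hf.aemeasurable (ae_add_measure_iff.1 hsum).1⟩

end Main

/-- If for some `u, v ∈ ℓ₁(Γ)` and constants `K, c ≥ 0` one has
`‖u − t v‖₁ = ∫_0^b |f(s) − t| ds + K + c|t|` for all `t ∈ ℝ`, then `f` is essentially
countably valued on `[0,b]`: it agrees a.e. on `[0,b]` with a function taking values
in a countable set. -/
theorem essentially_countably_valued_of_l1_norm_formula
    {Γ : Type*} (b : ℝ) (hb : 0 < b) (f : ℝ → ℝ)
    (hf : MeasureTheory.IntegrableOn f (Set.Icc 0 b) MeasureTheory.volume)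
    (K c : ℝ) (hK : 0 ≤ K) (hc : 0 ≤ c)
    (hexists : ∃ u v : lp (fun _ : Γ => ℝ) 1, ∀ t : ℝ,
      ‖u - t • v‖ = (∫ s in (0 : ℝ)..b, |f s - t|) + K + c * |t|) :
    ∃ D : Set ℝ, D.Countable ∧
      MeasureTheory.volume {s : ℝ | s ∈ Set.Icc 0 b ∧ f s ∉ D} = 0 := by
  obtain ⟨u, v, h⟩ := hexists
  simp only [intervalIntegral.integral_of_le hb.le, ← integral_Icc_eq_integral_Ioc] at h
  simpa only [ae_restrict_iff' measurableSet_Icc, ae_iff, Classical.not_imp] using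
    essentially_countably_valued_of_l1_norm_formula_general hf K c u v h
end

section
/- Let L > 0, let (rₙ)_{n∈ℕ} be a sequence in the open interval (0, L), let (cₙ)_{n∈ℕ} be strictly positive reals with Σₙ cₙ < ∞, and define f : ℝ → ℝ by f(s) = Σ_{n : s ≤ rₙ} cₙ. If the closure of the set {rₙ : n ∈ ℕ} has positive Lebesgue measure, then f is not essentially countably valued on [0, L]: for every countable set D ⊆ ℝ one has λ({s ∈ [0, L] : f(s) ∉ D}) > 0. Equivalently, the push-forward by f of the Lebesgue measure on [0, L] is not a discrete measure. -/
/-! If `m` lies in `K = closure {rₙ}` and `a < m < b`, then some `rₙ` lies in `(a, b)`, so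
`f a ≥ f b + cₙ > f b`. Hence no fibre of `f` contains three points of `K`, and `f` maps only
countably many points of `K` into a given countable set; removing them leaves the measure of `K`
unchanged. -/

open Set MeasureTheory

theorem finite_of_forall_lt_imp_not_lt {α : Type*} [LinearOrder α] {s : Set α}
    (hs : ∀ a ∈ s, ∀ b ∈ s, ∀ c ∈ s, a < b → ¬ b < c) : s.Finite := by
  by_contra hinf
  obtain ⟨t, hts, htcard⟩ := Set.Infinite.exists_subset_card_eq hinf 3
  let e := t.orderEmbOfFin htcard
  have he (i : Fin 3) : e i ∈ s := hts (t.orderEmbOfFin_mem htcard i)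
  exact hs (e 0) (he 0) (e 1) (he 1) (e 2) (he 2) (e.strictMono (by decide))
    (e.strictMono (by decide))

theorem countable_inter_preimage_of_forall_ne {α β : Type*} [LinearOrder α] {K : Set α}
    {f : α → β} (hf : ∀ a, ∀ m ∈ K, ∀ b, a < m → m < b → f a ≠ f b)
    {D : Set β} (hD : D.Countable) : (K ∩ f ⁻¹' D).Countable := by
  have hfibre (d : β) : (K ∩ f ⁻¹' {d}).Finite :=
    finite_of_forall_lt_imp_not_lt fun a ha m hm b hb ham hmb =>
      hf a m hm.1 b ham hmb (ha.2.trans hb.2.symm)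
  rw [← biUnion_preimage_singleton, inter_iUnion₂]
  exact hD.biUnion fun d _ => (hfibre d).countable

section ThresholdSum

variable {ι α : Type*} {c : ι → ℝ}

theorem tsum_ite_le_lt_tsum_ite_le [Preorder α] [DecidableLE α] {r : ι → α}
    (hc : ∀ i, 0 < c i) (hsum : Summable c) {a b : α} {i : ι} (ha : a ≤ r i) (hb : r i < b) :
    ∑' j, (if b ≤ r j then c j else 0) < ∑' j, if a ≤ r j then c j else 0 := by
  have hsummable (s : α) : Summable fun j => if s ≤ r j then c j else 0 :=
    (hsum.indicator {j | s ≤ r j}).congr fun j => by simp [indicator]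
  refine (hsummable b).tsum_lt_tsum (i := i) (fun j => ?_) ?_ (hsummable a)
  · have hab : b ≤ r j → a ≤ r j := (ha.trans hb.le).trans
    have := (hc j).le
    split_ifs <;> tauto
  · simpa only [ha, hb.not_ge, if_true, if_false] using hc i

variable [LinearOrder α] [TopologicalSpace α] [OrderClosedTopology α] {r : ι → α}

theorem tsum_ite_le_lt_tsum_ite_le_of_mem_closure (hc : ∀ i, 0 < c i) (hsum : Summable c)
    {a m b : α} (hm : m ∈ closure (range r)) (ham : a < m) (hmb : m < b) :
    ∑' i, (if b ≤ r i then c i else 0) < ∑' i, if a ≤ r i then c i else 0 := by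
  obtain ⟨_, hi, i, rfl⟩ := mem_closure_iff.1 hm (Ioo a b) isOpen_Ioo ⟨ham, hmb⟩
  exact tsum_ite_le_lt_tsum_ite_le hc hsum hi.1.le hi.2

theorem not_essentially_countably_valued_of_closure_pos_measure_general [MeasurableSpace α]
    (μ : Measure α) [NullSingletonClass μ] (hc : ∀ i, 0 < c i) (hsum : Summable c)
    {f : α → ℝ} (hf : ∀ s, f s = ∑' i, if s ≤ r i then c i else 0)
    (hcl : 0 < μ (closure (range r))) {D : Set ℝ} (hD : D.Countable) :
    0 < μ (closure (range r) \ f ⁻¹' D) := by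
  have hcount : (closure (range r) ∩ f ⁻¹' D).Countable :=
    countable_inter_preimage_of_forall_ne (fun a m hm b ham hmb => by
      simpa only [hf] using
        (tsum_ite_le_lt_tsum_ite_le_of_mem_closure hc hsum hm ham hmb).ne') hD
  rwa [← sdiff_self_inter, measure_sdiff_null (hcount.measure_zero μ)]

end ThresholdSum

/-- Let `L > 0`, `(rₙ) ⊆ (0, L)`, `(cₙ)` strictly positive summable reals, and
`f(s) = Σ_{n : s ≤ rₙ} cₙ`. If the closure of `{rₙ}` has positive Lebesgue measure, then
`f` is not essentially countably valued on `[0, L]`; equivalently, the push-forward of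
Lebesgue measure on `[0, L]` by `f` is not discrete. -/
theorem not_essentially_countably_valued_of_closure_pos_measure
    (L : ℝ) (hL : 0 < L)
    (r : ℕ → ℝ) (hr : ∀ n, r n ∈ Set.Ioo 0 L)
    (c : ℕ → ℝ) (hc : ∀ n, 0 < c n) (hsum : Summable c)
    (f : ℝ → ℝ) (hf : ∀ s, f s = ∑' n, if s ≤ r n then c n else 0)
    (hcl : 0 < MeasureTheory.volume (closure (Set.range r))) :
    ∀ D : Set ℝ, D.Countable →
      0 < MeasureTheory.volume {s : ℝ | s ∈ Set.Icc 0 L ∧ f s ∉ D} := by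
  intro D hD
  have hsub : closure (range r) ⊆ Icc 0 L :=
    closure_minimal (range_subset_iff.2 fun n => Ioo_subset_Icc_self (hr n)) isClosed_Icc
  exact (not_essentially_countably_valued_of_closure_pos_measure_general volume hc hsum hf hcl
    hD).trans_le (measure_mono fun _ hs => ⟨hsub hs.1, hs.2⟩)
end

section
/- Let M ⊆ ℝ be a closed set with Lebesgue measure zero, let x, y ∈ M with x < y, and let ε > 0. Then there exists a function f : ℝ → ℝ with Lipschitz constant at most 1 such that: (a) f(y) − f(x) ≥ (y − x) − ε; (b) f is constant on (−∞, x] and constant on [y, ∞); and (c) the restriction of f to M is locally constant, i.e. for every p ∈ M there exists δ > 0 such that f(q) = f(p) for all q ∈ M with |q − p| < δ. -/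
/-!
Choose an open set `U ⊇ M` of measure less than `ε` and let `f t` be the measure of
`(-∞, t] ∩ ((x, y) \ U)`. Then `f` grows at most at unit speed, does not grow outside `(x, y)` nor
on any interval inside `U`, and its total growth is `|(x, y) \ U| ≥ (y - x) - ε`.
-/

open MeasureTheory Set
open scoped NNReal

section LinearOrder

variable {α : Type*} [LinearOrder α]

theorem Iic_symmDiff_Iic_subset_uIoc (s t : α) :
    symmDiff (Iic s) (Iic t) ⊆ uIoc s t := by
  rintro a (⟨has, hat⟩ | ⟨hat, has⟩)
  · exact mem_uIoc.2 (.inr ⟨not_le.1 hat, has⟩)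
  · exact mem_uIoc.2 (.inl ⟨not_le.1 has, hat⟩)

variable [TopologicalSpace α] [ClosedIicTopology α] [MeasurableSpace α] [OpensMeasurableSpace α]

theorem dist_measureReal_Iic_le (μ : Measure α) [IsFiniteMeasure μ] (s t : α) :
    dist (μ.real (Iic s)) (μ.real (Iic t)) ≤ μ.real (uIoc s t) :=
  (abs_measureReal_sub_le_measureReal_symmDiff
    measurableSet_Iic.nullMeasurableSet measurableSet_Iic.nullMeasurableSet).trans
    (measureReal_mono (Iic_symmDiff_Iic_subset_uIoc s t))

theorem measureReal_Iic_eq_of_ordConnected_of_null {μ : Measure α} [IsFiniteMeasure μ]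
    {A : Set α} (hA : A.OrdConnected) (hμA : μ A = 0) {s t : α} (hs : s ∈ A) (ht : t ∈ A) :
    μ.real (Iic s) = μ.real (Iic t) := by
  have hst : μ (uIoc s t) = 0 :=
    measure_mono_null (uIoc_subset_uIcc.trans (hA.uIcc_subset hs ht)) hμA
  refine dist_le_zero.1 ((dist_measureReal_Iic_le μ s t).trans_eq ?_)
  simp only [measureReal_def, hst, ENNReal.toReal_zero]

theorem measureReal_restrict_Iic_sub_Iic (μ : Measure α) {S : Set α} {x y : α}
    (hS : S ⊆ Ioc x y) : (μ.restrict S).real (Iic y) - (μ.restrict S).real (Iic x) = μ.real S := by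
  have hx : Disjoint (Iic x) S := disjoint_left.2 fun _ ha haS => (hS haS).1.not_ge ha
  have hy : S ⊆ Iic y := fun _ ha => (hS ha).2
  rw [measureReal_restrict_apply measurableSet_Iic, measureReal_restrict_apply measurableSet_Iic,
    hx.inter_eq, inter_eq_right.2 hy, measureReal_empty, sub_zero]

end LinearOrder

theorem lipschitzWith_measureReal_Iic {μ : Measure ℝ} [IsFiniteMeasure μ] {K : ℝ≥0}
    (hμ : μ ≤ K • volume) : LipschitzWith K fun t => μ.real (Iic t) := by
  refine LipschitzWith.of_dist_le_mul fun s t => ?_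
  calc dist (μ.real (Iic s)) (μ.real (Iic t))
      ≤ μ.real (uIoc s t) := dist_measureReal_Iic_le μ s t
    _ ≤ (K • volume : Measure ℝ).real (uIoc s t) :=
      ENNReal.toReal_mono measure_Ioc_lt_top.ne (hμ _)
    _ = K * volume.real (uIoc s t) := measureReal_nnreal_smul_apply K
    _ = K * dist s t := by
      rw [measureReal_def, Real.volume_uIoc, ENNReal.toReal_ofReal (abs_nonneg _), dist_comm,
        Real.dist_eq]

theorem sub_sub_le_measureReal_Ioo_sdiff {U : Set ℝ} {ε : ℝ}
    (hU : volume U < ENNReal.ofReal ε) (x y : ℝ) : y - x - ε ≤ volume.real (Ioo x y \ U) :=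
  calc y - x - ε
      ≤ volume.real (Ioo x y) - volume.real U := by
        gcongr
        · exact Real.volume_real_Ioo.symm ▸ le_max_left _ _
        · exact (ENNReal.toReal_lt_of_lt_ofReal hU).le
    _ ≤ volume.real (Ioo x y \ U) := le_measureReal_sdiff hU.ne_top

theorem exists_lipschitz_locallyConstant_separating_general {M : Set ℝ} {ε : ℝ}
    (hM : volume M < ENNReal.ofReal ε) (x y : ℝ) :
    ∃ f : ℝ → ℝ, LipschitzWith 1 f ∧
      y - x - ε ≤ f y - f x ∧
      (∀ s ∈ Iic x, f s = f x) ∧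
      (∀ s ∈ Ici y, f s = f y) ∧
      (∀ p ∈ M, ∃ δ > 0, ∀ q, |q - p| < δ → f q = f p) := by
  obtain ⟨U, hMU, hUo, hUε⟩ := M.exists_isOpen_lt_of_lt _ hM
  set S := Ioo x y \ U
  have hSxy : S ⊆ Ioo x y := sdiff_subset
  have hS : MeasurableSet S := measurableSet_Ioo.diff hUo.measurableSet
  have : IsFiniteMeasure (volume.restrict S) :=
    isFiniteMeasure_restrict.2 (measure_ne_top_of_subset hSxy measure_Ioo_lt_top.ne)
  have null_of_disjoint {A : Set ℝ} (hA : Disjoint A S) : volume.restrict S A = 0 := by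
    rw [Measure.restrict_apply' hS, hA.inter_eq, measure_empty]
  have hIic : volume.restrict S (Iic x) = 0 :=
    null_of_disjoint (disjoint_left.2 fun _ ha haS => (hSxy haS).1.not_ge ha)
  have hIci : volume.restrict S (Ici y) = 0 :=
    null_of_disjoint (disjoint_left.2 fun _ ha haS => (hSxy haS).2.not_ge ha)
  refine ⟨fun t => (volume.restrict S).real (Iic t), lipschitzWith_measureReal_Iic ?_, ?_,
    fun s hs => measureReal_Iic_eq_of_ordConnected_of_null ordConnected_Iic hIic hs self_mem_Iic,
    fun s hs => measureReal_Iic_eq_of_ordConnected_of_null ordConnected_Ici hIci hs self_mem_Ici,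
    fun p hp => ?_⟩
  · simpa only [one_smul] using Measure.restrict_le_self
  · exact (sub_sub_le_measureReal_Ioo_sdiff hUε x y).trans_eq
      (measureReal_restrict_Iic_sub_Iic volume (hSxy.trans Ioo_subset_Ioc_self)).symm
  · obtain ⟨δ, hδ, hball⟩ := Metric.isOpen_iff.1 hUo p (hMU hp)
    have hnull : volume.restrict S (Metric.ball p δ) = 0 :=
      null_of_disjoint (disjoint_sdiff_right.mono_left hball)
    exact ⟨δ, hδ, fun q hq => measureReal_Iic_eq_of_ordConnected_of_null
      (convex_ball p δ).ordConnected hnull hq (Metric.mem_ball_self hδ)⟩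

/-- For a closed Lebesgue-null set `M ⊆ ℝ`, points `x < y` in `M`, and `ε > 0`, there is a
1-Lipschitz function `f : ℝ → ℝ` with `f(y) − f(x) ≥ (y − x) − ε` which is constant on
`(−∞, x]`, constant on `[y, ∞)`, and locally constant on `M`. -/
theorem exists_lipschitz_locallyConstant_separating
    (M : Set ℝ) (hMc : IsClosed M) (hM0 : MeasureTheory.volume M = 0)
    (x y : ℝ) (hx : x ∈ M) (hy : y ∈ M) (hxy : x < y) (ε : ℝ) (hε : 0 < ε) :
    ∃ f : ℝ → ℝ, LipschitzWith 1 f ∧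
      f y - f x ≥ (y - x) - ε ∧
      (∀ s ∈ Set.Iic x, f s = f x) ∧
      (∀ s ∈ Set.Ici y, f s = f y) ∧
      (∀ p ∈ M, ∃ δ > (0 : ℝ), ∀ q ∈ M, |q - p| < δ → f q = f p) := by
  obtain ⟨f, hf, hgap, hleft, hright, hM⟩ :=
    exists_lipschitz_locallyConstant_separating_general
      (hM0.trans_lt (ENNReal.ofReal_pos.2 hε)) x y
  exact ⟨f, hf, hgap, hleft, hright, fun p hp => (hM p hp).imp fun δ h => ⟨h.1, fun q _ => h.2 q⟩⟩
end
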